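/- arXiv:1609.06902 — 3 statements merged into one kernel-verified Lean document; each statement's English description precedes it below -/
import Mathlib

section
/- Let E be a field. Let (D, φ, L) and (D′, φ′, L′) be two triples, where D and D′ are two-dimensional E-vector spaces, φ : D → D and φ′ : D′ → D′ are E-linear endomorphisms, and L ⊆ D and L′ ⊆ D′ are one-dimensional subspaces not stable under φ and φ′ respectively. If trace φ = trace φ′ and det φ = det φ′, then there exists an E-linear isomorphism ψ : D → D′ such that ψ ∘ φ = φ′ ∘ ψ and ψ(L) = L′. -/
/-!
If `v` is a cyclic vector of an endomorphism `φ` of a free module `M` of rank `n`, then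
`p ↦ p(φ) v` maps the polynomials of degree less than `n` onto `M`, hence bijectively, so its
kernel consists of the multiples of the characteristic polynomial `χ` of `φ`. Thus `(M, φ, v)` is
isomorphic to `(R[X] / (χ), X, 1)` and is determined by `χ`. In a plane, a generator of a line
that is not stable under `φ` is a cyclic vector, and `χ = X² - (tr φ) X + det φ`.
-/

open Polynomial Module

section CyclicVector

variable {R M N : Type*}

section Semiring

variable [CommSemiring R] [AddCommMonoid M] [Module R M]

/-- The map `p ↦ p(φ) v` from polynomials to the module on which `φ` acts. It is recorded as an
`R`-linear map, so that `M` need not carry an `R[X]`-module structure. -/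
noncomputable def aevalVector (φ : End R M) (v : M) : R[X] →ₗ[R] M :=
  (aeval φ).toLinearMap.flip v

/-- `v` is a cyclic vector of `φ` if every vector is of the form `p(φ) v` for a polynomial `p`,
that is, if `v` generates `M` as an `R[φ]`-module. -/
def IsCyclicVector (φ : End R M) (v : M) : Prop :=
  Function.Surjective (aevalVector φ v)

theorem aevalVector_apply (φ : End R M) (v : M) (p : R[X]) :
    aevalVector φ v p = aeval φ p v :=
  rfl

theorem aevalVector_one (φ : End R M) (v : M) : aevalVector φ v 1 = v := by
  simp [aevalVector_apply]

theorem aevalVector_X_mul (φ : End R M) (v : M) (p : R[X]) :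
    aevalVector φ v (X * p) = φ (aevalVector φ v p) := by
  simp [aevalVector_apply]

end Semiring

section Ring

variable [CommRing R] [AddCommGroup M] [Module R M] [AddCommGroup N] [Module R N]
  {φ : End R M} {φ' : End R N} {v : M} {v' : N}

theorem IsCyclicVector.exists_linearEquiv_of_ker_eq (hv : IsCyclicVector φ v)
    (hv' : IsCyclicVector φ' v') (hker : (aevalVector φ v).ker = (aevalVector φ' v').ker) :
    ∃ ψ : M ≃ₗ[R] N, (∀ x, ψ (φ x) = φ' (ψ x)) ∧ ψ v = v' := by
  let ψ : M ≃ₗ[R] N := ((aevalVector φ v).quotKerEquivOfSurjective hv).symm ≪≫ₗ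
    Submodule.quotEquivOfEq _ _ hker ≪≫ₗ (aevalVector φ' v').quotKerEquivOfSurjective hv'
  have hψ (p : R[X]) : ψ (aevalVector φ v p) = aevalVector φ' v' p := by
    simp [ψ, LinearMap.quotKerEquivOfSurjective_symm_apply _ hv,
      LinearMap.quotKerEquivOfSurjective_apply_mk _ hv']
  refine ⟨ψ, fun x ↦ ?_, ?_⟩
  · obtain ⟨p, rfl⟩ := hv x
    rw [← aevalVector_X_mul, hψ, hψ, aevalVector_X_mul]
  · simpa only [aevalVector_one] using hψ 1

variable [Module.Free R M] [Module.Finite R M] [Module.Free R N] [Module.Finite R N]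

theorem aevalVector_modByMonic_charpoly (φ : End R M) (v : M) (p : R[X]) :
    aevalVector φ v (p %ₘ φ.charpoly) = aevalVector φ v p := by
  rw [aevalVector_apply, aevalVector_apply,
    aeval_modByMonic_eq_self_of_root φ.aeval_self_charpoly]

theorem modByMonic_charpoly_mem_degreeLT [Nontrivial R] (φ : End R M) (p : R[X]) :
    p %ₘ φ.charpoly ∈ degreeLT R (finrank R M) := by
  rw [mem_degreeLT, ← φ.charpoly_natDegree, ← degree_eq_natDegree φ.charpoly_monic.ne_zero]
  exact degree_modByMonic_lt p φ.charpoly_monic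

theorem IsCyclicVector.injective_domRestrict_degreeLT [Nontrivial R] (hv : IsCyclicVector φ v) :
    Function.Injective ((aevalVector φ v).domRestrict (degreeLT R (finrank R M))) := by
  let e : degreeLT R (finrank R M) ≃ₗ[R] M :=
    degreeLTEquiv R (finrank R M) ≪≫ₗ (finBasis R M).equivFun.symm
  refine OrzechProperty.injective_of_surjective_of_injective e.toLinearMap _ e.injective
    fun x ↦ ?_
  obtain ⟨p, rfl⟩ := hv x
  exact ⟨⟨_, modByMonic_charpoly_mem_degreeLT φ p⟩, aevalVector_modByMonic_charpoly φ v p⟩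

theorem IsCyclicVector.aevalVector_eq_zero_iff (hv : IsCyclicVector φ v) {p : R[X]} :
    aevalVector φ v p = 0 ↔ φ.charpoly ∣ p := by
  nontriviality R
  rw [← modByMonic_eq_zero_iff_dvd φ.charpoly_monic, ← aevalVector_modByMonic_charpoly]
  refine ⟨fun h ↦ ?_, fun h ↦ by rw [h, map_zero]⟩
  have h0 := (injective_iff_map_eq_zero _).1 hv.injective_domRestrict_degreeLT
    ⟨_, modByMonic_charpoly_mem_degreeLT φ p⟩ h
  exact congrArg Subtype.val h0

theorem IsCyclicVector.exists_linearEquiv_of_charpoly_eq (hv : IsCyclicVector φ v)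
    (hv' : IsCyclicVector φ' v') (hφ : φ.charpoly = φ'.charpoly) :
    ∃ ψ : M ≃ₗ[R] N, (∀ x, ψ (φ x) = φ' (ψ x)) ∧ ψ v = v' := by
  refine hv.exists_linearEquiv_of_ker_eq hv' (Submodule.ext fun p ↦ ?_)
  rw [LinearMap.mem_ker, LinearMap.mem_ker, hv.aevalVector_eq_zero_iff,
    hv'.aevalVector_eq_zero_iff, hφ]

end Ring

end CyclicVector

theorem charpoly_of_finrank_eq_two {R M : Type*} [CommRing R] [AddCommGroup M] [Module R M]
    [Module.Free R M] [Module.Finite R M] (h2 : finrank R M = 2) (φ : End R M) :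
    φ.charpoly = X ^ 2 - C (LinearMap.trace R M φ) * X + C (LinearMap.det φ) := by
  nontriviality R
  let b : Basis (Fin 2) R M := finBasisOfFinrankEq R M h2
  rw [← φ.charpoly_toMatrix b, Matrix.charpoly_fin_two, LinearMap.trace_eq_matrix_trace R b,
    LinearMap.det_toMatrix]

section Plane

variable {K V : Type*} [Field K] [AddCommGroup V] [Module K V]

theorem isCyclicVector_of_notMem_span_singleton (h2 : finrank K V = 2) {φ : End K V} {v : V}
    (hv : φ v ∉ K ∙ v) : IsCyclicVector φ v := by
  have : FiniteDimensional K V := .of_finrank_eq_succ h2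
  have v_ne_zero : v ≠ 0 := by
    rintro rfl
    simp at hv
  have v_mem : v ∈ (aevalVector φ v).range := ⟨1, aevalVector_one φ v⟩
  have φv_mem : φ v ∈ (aevalVector φ v).range := ⟨X, by simp [aevalVector_apply]⟩
  have span_lt_range : K ∙ v < (aevalVector φ v).range :=
    SetLike.lt_iff_le_and_exists.2
      ⟨(Submodule.span_singleton_le_iff_mem _ _).2 v_mem, φ v, φv_mem, hv⟩
  have one_lt_finrank_range := Submodule.finrank_lt_finrank_of_lt span_lt_range
  rw [finrank_span_singleton v_ne_zero] at one_lt_finrank_range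
  refine LinearMap.range_eq_top.1 (Submodule.eq_top_of_finrank_eq (le_antisymm ?_ ?_))
  · exact Submodule.finrank_le _
  · exact h2.le.trans one_lt_finrank_range

theorem exists_isCyclicVector_span_eq (h2 : finrank K V = 2) {φ : End K V} {L : Submodule K V}
    (hL : finrank K L = 1) (hφL : ¬ L.map φ ≤ L) :
    ∃ v, IsCyclicVector φ v ∧ K ∙ v = L := by
  have : FiniteDimensional K V := .of_finrank_eq_succ h2
  obtain ⟨v, rfl⟩ := (L.finrank_le_one_iff_isPrincipal.1 hL.le).principal
  refine ⟨v, isCyclicVector_of_notMem_span_singleton h2 ?_, rfl⟩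
  rwa [Submodule.map_span, Set.image_singleton, Submodule.span_singleton_le_iff_mem] at hφL

end Plane

/-- Two triples `(D, φ, L)` and `(D', φ', L')`, each consisting of a
two-dimensional `E`-vector space, an endomorphism, and a one-dimensional
subspace not stable under the endomorphism, are isomorphic (by an isomorphism
intertwining the endomorphisms and matching the marked lines) as soon as the
traces and determinants of the endomorphisms agree. -/
theorem stmt_2 {E D D' : Type*} [Field E]
    [AddCommGroup D] [Module E D] [AddCommGroup D'] [Module E D']
    (hD : Module.finrank E D = 2) (hD' : Module.finrank E D' = 2)
    (φ : D →ₗ[E] D) (φ' : D' →ₗ[E] D')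
    (L : Submodule E D) (L' : Submodule E D')
    (hL : Module.finrank E L = 1) (hL' : Module.finrank E L' = 1)
    (hstab : ¬ L.map φ ≤ L) (hstab' : ¬ L'.map φ' ≤ L')
    (htr : LinearMap.trace E D φ = LinearMap.trace E D' φ')
    (hdet : LinearMap.det φ = LinearMap.det φ') :
    ∃ ψ : D ≃ₗ[E] D', (∀ x : D, ψ (φ x) = φ' (ψ x)) ∧
      L.map (ψ : D →ₗ[E] D') = L' := by
  have : FiniteDimensional E D := .of_finrank_eq_succ hD
  have : FiniteDimensional E D' := .of_finrank_eq_succ hD'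
  obtain ⟨v, hv, rfl⟩ := exists_isCyclicVector_span_eq hD hL hstab
  obtain ⟨v', hv', rfl⟩ := exists_isCyclicVector_span_eq hD' hL' hstab'
  have charpoly_eq : φ.charpoly = φ'.charpoly := by
    rw [charpoly_of_finrank_eq_two hD, charpoly_of_finrank_eq_two hD', htr, hdet]
  obtain ⟨ψ, hψ, hψv⟩ := hv.exists_linearEquiv_of_charpoly_eq hv' charpoly_eq
  refine ⟨ψ, hψ, ?_⟩
  rw [Submodule.map_span, Set.image_singleton, LinearEquiv.coe_coe, hψv]
end

section
/- Let R be a commutative ring, ϖ ∈ R, and let f : M → N be an injective homomorphism of R-modules. Assume: (i) N has no ϖ-torsion, i.e. ϖ·n = 0 implies n = 0 for n ∈ N; (ii) the induced map M/ϖM → N/ϖN is bijective; (iii) for every n ∈ N there exists a natural number k such that ϖ^k·n lies in the image of f. Then f is an isomorphism. -/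
open Pointwise

/-!
Injectivity of `f` modulo `ϖ` gives `ϖN ∩ f(M) = ϖ f(M)`. As `ϖ` is regular on `N`, this means
that `ϖ` is regular on `coker f`; but every element of `coker f` is killed by a power of `ϖ`, so
`coker f = 0`.
-/

theorem eq_top_of_isSMulRegular_quotient_of_pow_smul_mem {R M : Type*} [Ring R]
    [AddCommGroup M] [Module R M] {r : R} {P : Submodule R M}
    (hreg : IsSMulRegular (M ⧸ P) r) (hpow : ∀ x : M, ∃ k : ℕ, r ^ k • x ∈ P) : P = ⊤ :=
  P.eq_top_iff'.mpr fun x =>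
    let ⟨k, hk⟩ := hpow x
    mem_of_isSMulRegular_quotient_of_smul_mem (hreg.pow k) hk

theorem mapQ_injective_iff_comap_le {R R₂ M M₂ : Type*} [Ring R] [Ring R₂]
    [AddCommGroup M] [Module R M] [AddCommGroup M₂] [Module R₂ M₂] {τ₁₂ : R →+* R₂}
    {p : Submodule R M} {q : Submodule R₂ M₂} {f : M →ₛₗ[τ₁₂] M₂} (h : p ≤ q.comap f) :
    Function.Injective (p.mapQ q f h) ↔ q.comap f ≤ p := by
  rw [← LinearMap.ker_eq_bot, Submodule.ker_mapQ, ← le_bot_iff, Submodule.map_le_iff_le_comap,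
    Submodule.comap_bot, Submodule.ker_mkQ]

section

variable {R M N : Type*} [CommRing R] [AddCommGroup M] [Module R M] [AddCommGroup N] [Module R N]
  {r : R} {f : M →ₗ[R] N}

theorem quotSMulTop_map_injective_iff_comap_le :
    Function.Injective (QuotSMulTop.map r f) ↔
      (r • (⊤ : Submodule R N)).comap f ≤ r • (⊤ : Submodule R M) :=
  have smul_top_le_comap : r • (⊤ : Submodule R M) ≤ (r • (⊤ : Submodule R N)).comap f :=
    Submodule.map_le_iff_le_comap.mp <|
      (Submodule.map_pointwise_smul r ⊤ f).trans_le (smul_mono_right r le_top)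
  mapQ_injective_iff_comap_le smul_top_le_comap

theorem isSMulRegular_quotient_range_of_quotSMulTop_map_injective
    (hreg : IsSMulRegular N r) (hinj : Function.Injective (QuotSMulTop.map r f)) :
    IsSMulRegular (N ⧸ LinearMap.range f) r := by
  refine (hreg.isSMulRegular_on_quot_iff_smul_top_inf_eq_smul _).mpr ?_
  calc r • ⊤ ⊓ LinearMap.range f
      = ((r • (⊤ : Submodule R N)).comap f).map f := by rw [Submodule.map_comap_eq, inf_comm]
    _ ≤ (r • (⊤ : Submodule R M)).map f :=
        Submodule.map_mono (quotSMulTop_map_injective_iff_comap_le.mp hinj)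
    _ = r • LinearMap.range f := by rw [Submodule.map_pointwise_smul, Submodule.map_top]

theorem stmt_5_general (hreg : IsSMulRegular N r)
    (hmod : Function.Injective (QuotSMulTop.map r f))
    (hcok : ∀ n : N, ∃ k : ℕ, r ^ k • n ∈ LinearMap.range f) :
    Function.Surjective f :=
  LinearMap.range_eq_top.mp <| eq_top_of_isSMulRegular_quotient_of_pow_smul_mem
    (isSMulRegular_quotient_range_of_quotSMulTop_map_injective hreg hmod) hcok

end

/-- Let `R` be a commutative ring, `ϖ ∈ R`, and `f : M → N` an injective map of
`R`-modules.  If `N` has no `ϖ`-torsion, the induced map `M/ϖM → N/ϖN` is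
bijective, and the cokernel of `f` is killed by powers of `ϖ` (every element of
`N` has a `ϖ`-power multiple in the image of `f`), then `f` is an
isomorphism. -/
theorem stmt_5 {R M N : Type*} [CommRing R]
    [AddCommGroup M] [Module R M] [AddCommGroup N] [Module R N]
    (ϖ : R) (f : M →ₗ[R] N)
    (hinj : Function.Injective f)
    (htors : ∀ n : N, ϖ • n = 0 → n = 0)
    (hmod : Function.Bijective
      (Submodule.mapQ (ϖ • (⊤ : Submodule R M)) (ϖ • (⊤ : Submodule R N)) f
        (by
          intro x hx
          rw [← SetLike.mem_coe, Submodule.coe_pointwise_smul] at hx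
          obtain ⟨m, -, rfl⟩ := hx
          rw [Submodule.mem_comap, map_smul, ← SetLike.mem_coe,
            Submodule.coe_pointwise_smul]
          exact Set.smul_mem_smul_set (Set.mem_univ _))))
    (hcok : ∀ n : N, ∃ k : ℕ, ϖ ^ k • n ∈ LinearMap.range f) :
    Function.Bijective f :=
  ⟨hinj, stmt_5_general (.of_right_eq_zero_of_smul htors) hmod.1 hcok⟩
end

section
/- Let p be an odd prime. Let I₁ be the subgroup of GL₂(ℤ_p) consisting of matrices g whose reduction modulo p is upper triangular unipotent (i.e. the reductions of the diagonal entries of g are 1 and the reduction of the lower-left entry of g is 0). Let Z₁ be the subgroup of I₁ consisting of the scalar matrices λ·Id with λ ∈ ℤ_pˣ and λ ≡ 1 mod p (a central, hence normal, subgroup of I₁), and let Γ = {u ∈ ℤ_pˣ : u ≡ 1 mod p}. Then det(g) ∈ Γ for every g ∈ I₁, and the map g ↦ (g·Z₁, (det g)⁻¹) is a group isomorphism from I₁ onto the direct product (I₁/Z₁) × Γ. -/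
open Matrix

/-!
The determinant of the scalar matrix `u` is `u ^ n`. If `n` is invertible, raising to the `n`-th
power is bijective on the units congruent to `1` modulo a Henselian ideal: Hensel's lemma yields
`n`-th roots, and in `u ^ n - 1 = (1 + u + ⋯ + u ^ (n - 1)) * (u - 1)` the first factor is congruent
to `n`, hence invertible. So the inverse determinant restricts to an isomorphism from the central
subgroup of scalars onto its target, and this splits off the scalars as a direct factor.
-/

theorem bijective_mk'_prod_of_bijective_comp {G A : Type*} [Group G] [Group A] {N : Subgroup G}
    [N.Normal] {φ : G →* A} {s : A →* G} (hs : s.range = N) (hφs : Function.Bijective (φ ∘ s)) :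
    Function.Bijective ((QuotientGroup.mk' N).prod φ) := by
  subst hs
  refine ⟨(injective_iff_map_eq_one _).2 fun g hg ↦ ?_, ?_⟩
  · obtain ⟨hgN, hgφ⟩ := Prod.ext_iff.1 hg
    obtain ⟨a, rfl⟩ := (QuotientGroup.eq_one_iff g).1 hgN
    have ha : a = 1 := hφs.injective (by simpa using hgφ)
    rw [ha, map_one]
  · rintro ⟨q, a⟩
    obtain ⟨g, rfl⟩ := QuotientGroup.mk_surjective q
    obtain ⟨b, hb : φ (s b) = (φ g)⁻¹ * a⟩ := hφs.surjective ((φ g)⁻¹ * a)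
    refine ⟨g * s b, Prod.ext (QuotientGroup.mk_mul_of_mem g ⟨b, rfl⟩) ?_⟩
    simp [hb]

section PowerMap

variable {R k : Type*} [CommRing R] [CommRing k] {π : R →+* k} {n : ℕ}

theorem isUnit_geom_sum_of_map_eq_one (hπ : RingHom.ker π ≤ Ideal.jacobson ⊥)
    (hn : IsUnit (n : R)) {u : R} (hu : π u = 1) : IsUnit (∑ i ∈ Finset.range n, u ^ i) := by
  have := isLocalHom_of_le_jacobson_bot _ hπ
  have hmk : Ideal.Quotient.mk (RingHom.ker π) (∑ i ∈ Finset.range n, u ^ i) =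
      Ideal.Quotient.mk (RingHom.ker π) n := by
    rw [Ideal.Quotient.eq, RingHom.mem_ker]
    simp [hu]
  exact isUnit_of_map_unit (Ideal.Quotient.mk (RingHom.ker π)) _ (hmk ▸ hn.map _)

theorem eq_one_of_pow_eq_one_of_map_eq_one (hπ : RingHom.ker π ≤ Ideal.jacobson ⊥)
    (hn : IsUnit (n : R)) {u : R} (hu : π u = 1) (hpow : u ^ n = 1) : u = 1 := by
  have hmul : (∑ i ∈ Finset.range n, u ^ i) * (u - 1) = 0 := by
    rw [geom_sum_mul, hpow, sub_self]
  exact sub_eq_zero.1 ((isUnit_geom_sum_of_map_eq_one hπ hn hu).mul_right_eq_zero.1 hmul)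

theorem exists_units_pow_eq_of_map_eq_one [HenselianRing R (RingHom.ker π)]
    (hn : IsUnit (n : R)) {u : Rˣ} (hu : π u = 1) : ∃ v : Rˣ, π v = 1 ∧ v ^ n = u := by
  cases subsingleton_or_nontrivial R with
  | inl _ => exact ⟨u, hu, Subsingleton.elim _ _⟩
  | inr _ =>
    have hn0 : n ≠ 0 := by
      rintro rfl
      simp at hn
    let f : Polynomial R := Polynomial.X ^ n - Polynomial.C (u : R)
    have hmonic : f.Monic := Polynomial.monic_X_pow_sub_C _ hn0
    have hf : f.eval 1 ∈ RingHom.ker π := by simp [f, RingHom.mem_ker, hu]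
    have hf' : f.derivative.eval 1 = n := by simp [f, Polynomial.derivative_X_pow]
    obtain ⟨v, hroot, hv⟩ := HenselianRing.is_henselian f hmonic 1 hf (hf' ▸ hn.map _)
    rw [RingHom.mem_ker, map_sub, map_one, sub_eq_zero] at hv
    have hvu : v ^ n = u := sub_eq_zero.1 (by simpa [f] using hroot)
    obtain ⟨v, rfl⟩ := (isUnit_pow_iff hn0).1 (hvu ▸ u.isUnit)
    exact ⟨v, hv, Units.ext hvu⟩

theorem bijective_pow_of_mem_iff_map_eq_one [HenselianRing R (RingHom.ker π)]
    (hn : IsUnit (n : R)) {Γ : Subgroup Rˣ} (hΓ : ∀ u : Rˣ, u ∈ Γ ↔ π u = 1) :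
    Function.Bijective fun u : Γ ↦ u ^ n := by
  constructor
  · refine (injective_iff_map_eq_one (powMonoidHom n : Γ →* Γ)).2 fun u hu ↦ ?_
    have hpow : ((u : Rˣ) : R) ^ n = 1 := congrArg (fun w : Γ ↦ ((w : Rˣ) : R)) hu
    exact Subtype.ext <| Units.ext <|
      eq_one_of_pow_eq_one_of_map_eq_one HenselianRing.jac hn ((hΓ u).1 u.2) hpow
  · intro u
    obtain ⟨v, hv, hvu⟩ := exists_units_pow_eq_of_map_eq_one hn ((hΓ u).1 u.2)
    exact ⟨⟨v, (hΓ v).2 hv⟩, Subtype.ext hvu⟩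

end PowerMap

section GeneralLinearGroup

variable {R k n : Type*} [CommRing R] [CommRing k] [Fintype n] [DecidableEq n]

theorem map_det_eq_one_of_unitriangular [LinearOrder n] {π : R →+* k} {M : Matrix n n R}
    (hdiag : ∀ i, π (M i i) = 1) (hlower : ∀ i j, j < i → π (M i j) = 0) : π M.det = 1 := by
  have hupper : (π.mapMatrix M).IsUpperTriangular := fun i j hij ↦ hlower i j hij
  rw [π.map_det, det_of_isUpperTriangular hupper]
  simp [hdiag]

theorem exists_mulEquiv_quotient_scalar_prod {Γ : Subgroup Rˣ}
    (hpow : Function.Bijective fun u : Γ ↦ u ^ Fintype.card n) {H : Subgroup (GL n R)}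
    (hdet : ∀ g ∈ H, GeneralLinearGroup.det g ∈ Γ) {Z : Subgroup H} [Z.Normal]
    (hZ : Z.map H.subtype = Γ.map (GeneralLinearGroup.scalar n)) :
    ∃ e : H ≃* (H ⧸ Z) × Γ, ∀ g : H, (e g).1 = QuotientGroup.mk g ∧
      ((e g).2 : Rˣ) = (GeneralLinearGroup.det (g : GL n R))⁻¹ := by
  let φ : H →* Γ :=
    ((GeneralLinearGroup.det.comp H.subtype).codRestrict Γ fun g ↦ hdet g g.2)⁻¹
  have hscalar (u : Γ) : GeneralLinearGroup.scalar n (u : Rˣ) ∈ H :=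
    H.map_subtype_le Z (hZ ▸ Subgroup.mem_map_of_mem _ u.2)
  let s : Γ →* H := ((GeneralLinearGroup.scalar n).comp Γ.subtype).codRestrict H hscalar
  have hs : s.range = Z := by
    apply Subgroup.map_injective H.subtype_injective
    rw [hZ, MonoidHom.map_range]
    exact MonoidHom.domRestrict_range Γ (GeneralLinearGroup.scalar n)
  have hφs : φ ∘ s = (·⁻¹) ∘ fun u : Γ ↦ u ^ Fintype.card n := by
    ext1 u
    exact congrArg (·⁻¹) (Subtype.ext (GeneralLinearGroup.det_scalar (u : Rˣ)))
  have hbij : Function.Bijective ((QuotientGroup.mk' Z).prod φ) :=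
    bijective_mk'_prod_of_bijective_comp hs (hφs ▸ inv_involutive.bijective.comp hpow)
  exact ⟨MulEquiv.ofBijective _ hbij, fun g ↦ ⟨rfl, rfl⟩⟩

theorem stmt_7_general [LinearOrder n] (π : R →+* k) [HenselianRing R (RingHom.ker π)]
    (hn : IsUnit (Fintype.card n : R)) (I₁ : Subgroup (GL n R))
    (hI₁ : ∀ g : GL n R, g ∈ I₁ ↔ (∀ i, π (g i i) = 1) ∧ ∀ i j, j < i → π (g i j) = 0)
    (Z₁ : Subgroup I₁) [Z₁.Normal]
    (hZ₁ : ∀ g : I₁, g ∈ Z₁ ↔ ∃ u : Rˣ, π u = 1 ∧ ((g : GL n R) : Matrix n n R) = (u : R) • 1)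
    (Γ : Subgroup Rˣ) (hΓ : ∀ u : Rˣ, u ∈ Γ ↔ π u = 1) :
    (∀ g : GL n R, g ∈ I₁ → GeneralLinearGroup.det g ∈ Γ) ∧
    ∃ e : I₁ ≃* (I₁ ⧸ Z₁) × Γ, ∀ g : I₁, (e g).1 = QuotientGroup.mk g ∧
      ((e g).2 : Rˣ) = (GeneralLinearGroup.det (g : GL n R))⁻¹ := by
  have hdet (g : GL n R) (hg : g ∈ I₁) : GeneralLinearGroup.det g ∈ Γ :=
    (hΓ _).2 (map_det_eq_one_of_unitriangular ((hI₁ g).1 hg).1 ((hI₁ g).1 hg).2)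
  have hscalar (u : Rˣ) (hu : π u = 1) : GeneralLinearGroup.scalar n u ∈ I₁ :=
    (hI₁ _).2 ⟨fun i ↦ by simp [hu], fun i j hij ↦ by simp [hij.ne']⟩
  have hcoe (g : GL n R) (u : Rˣ) :
      (g : Matrix n n R) = (u : R) • 1 ↔ GeneralLinearGroup.scalar n u = g := by
    rw [Units.ext_iff, GeneralLinearGroup.coe_scalar, scalar_apply, smul_one_eq_diagonal, eq_comm]
  have hZ : Z₁.map I₁.subtype = Γ.map (GeneralLinearGroup.scalar n) := by
    ext g
    simp only [Subgroup.mem_map, Subgroup.subtype_apply, hZ₁, hcoe, hΓ]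
    constructor
    · rintro ⟨_, hg, rfl⟩
      exact hg
    · rintro ⟨u, hu, rfl⟩
      exact ⟨⟨_, hscalar u hu⟩, ⟨u, hu, rfl⟩, rfl⟩
  exact ⟨hdet, exists_mulEquiv_quotient_scalar_prod
    (bijective_pow_of_mem_iff_map_eq_one hn hΓ) hdet hZ⟩

end GeneralLinearGroup

instance henselianRing_ker_toZMod {p : ℕ} [Fact p.Prime] :
    HenselianRing ℤ_[p] (RingHom.ker (PadicInt.toZMod : ℤ_[p] →+* ZMod p)) := by
  rw [PadicInt.ker_toZMod]
  infer_instance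

/-- Let `p` be an odd prime, `I₁` the subgroup of `GL₂(ℤ_p)` of matrices that
are upper triangular unipotent modulo `p`, `Z₁` its subgroup of scalar matrices
`λ·Id` with `λ ≡ 1 mod p` (a central, hence normal, subgroup), and
`Γ = {u ∈ ℤ_pˣ : u ≡ 1 mod p}`.  Then `det g ∈ Γ` for all `g ∈ I₁`, and
`g ↦ (g·Z₁, (det g)⁻¹)` is a group isomorphism `I₁ ≅ (I₁/Z₁) × Γ`. -/
theorem stmt_7 (p : ℕ) [Fact p.Prime] (hp : Odd p)
    (I₁ : Subgroup (GL (Fin 2) ℤ_[p]))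
    (hI₁ : ∀ g : GL (Fin 2) ℤ_[p], g ∈ I₁ ↔
      (PadicInt.toZMod (g 0 0) = 1 ∧ PadicInt.toZMod (g 1 1) = 1 ∧
        PadicInt.toZMod (g 1 0) = 0))
    (Z₁ : Subgroup I₁) [Z₁.Normal]
    (hZ₁ : ∀ g : I₁, g ∈ Z₁ ↔
      ∃ u : ℤ_[p]ˣ, PadicInt.toZMod (u : ℤ_[p]) = 1 ∧
        ((g : GL (Fin 2) ℤ_[p]) : Matrix (Fin 2) (Fin 2) ℤ_[p]) =
          (u : ℤ_[p]) • (1 : Matrix (Fin 2) (Fin 2) ℤ_[p]))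
    (Γ : Subgroup ℤ_[p]ˣ)
    (hΓ : ∀ u : ℤ_[p]ˣ, u ∈ Γ ↔ PadicInt.toZMod (u : ℤ_[p]) = 1) :
    (∀ g : GL (Fin 2) ℤ_[p], g ∈ I₁ → Matrix.GeneralLinearGroup.det g ∈ Γ) ∧
    ∃ e : I₁ ≃* (I₁ ⧸ Z₁) × Γ, ∀ g : I₁,
      (e g).1 = QuotientGroup.mk g ∧
      ((e g).2 : ℤ_[p]ˣ) =
        (Matrix.GeneralLinearGroup.det (g : GL (Fin 2) ℤ_[p]))⁻¹ := by
  have isUnit_two : IsUnit ((2 : ℕ) : ℤ_[p]) :=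
    PadicInt.isUnit_iff.2 (PadicInt.norm_natCast_eq_one_iff.2 hp.coprime_two_right)
  exact stmt_7_general (n := Fin 2) PadicInt.toZMod isUnit_two I₁
    (by simp [hI₁, Fin.forall_fin_two, and_assoc]) Z₁ hZ₁ Γ hΓ
end
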